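/- Let n, m ≥ 1 and for i = 1,…,k let φ_i : ℝⁿ → ℝ be a measurable function and j_i ∈ {1,…,m}, and set E_i = {(x,y) ∈ ℝⁿ × ℝᵐ : y_{j_i} = φ_i(x)}. If T : L²(ℝⁿ) → L²(ℝᵐ) is a compact operator supported on E₁ ∪ … ∪ E_k (with respect to Lebesgue measure on both sides), then T = 0. -/

import Mathlib

/-!
Let `P A` denote multiplication by the indicator of `A`. The statement holds for finite unions of
sets `{(x, y) | π_i y = φ_i x}`, where `π_i : Y → Z` and `φ_i : X → Z` are measurable, `Z` is a
compact space (first countable, T₁) and every fibre of every `π_i` is null. It is applied with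
`Z = EReal`, `π_i y = y_{j_i}`.

The proof is by induction on the number of graphs. For a measurable `A ⊆ Z`, the commutator
`D = P (π₀⁻¹ A) T - T P (φ₀⁻¹ A)` is compact and supported on the union of the *other* graphs
(`SupportedOn.commutator`): after cutting `α` along `φ₀⁻¹ A` and `β` along `π₀⁻¹ A`, only the
off-diagonal blocks of `P β ∘ D ∘ P α` survive, and those do not meet the graph of index `0`. By
induction `D = 0`, so `T` intertwines `P (π₀⁻¹ A)` and `P (φ₀⁻¹ A)` for all `A`.

An intertwining compact `T` vanishes (`eq_zero_of_intertwines`). Fix `ε > 0`. As the fibres of `π₀`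
are null and `T` is compact, each point of `Z` has a neighbourhood `A` with
`‖P (π₀⁻¹ A) T‖ ≤ ε` (`exists_norm_indL_le`). Intertwining makes `T` block diagonal, so this bound
passes to finite unions, and compactness of `Z` gives `‖T‖ ≤ ε`.
-/

open MeasureTheory

/-- A subset of `X × Y` is marginally null if it is contained in
`(X₀ × Y) ∪ (X × Y₀)` with `μ X₀ = 0` and `ν Y₀ = 0`. -/
def MarginallyNull {X Y : Type*} [MeasurableSpace X] [MeasurableSpace Y]
    (μ : Measure X) (ν : Measure Y) (M : Set (X × Y)) : Prop :=
  ∃ (X₀ : Set X) (Y₀ : Set Y), MeasurableSet X₀ ∧ MeasurableSet Y₀ ∧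
    μ X₀ = 0 ∧ ν Y₀ = 0 ∧ M ⊆ (X₀ ×ˢ (Set.univ : Set Y)) ∪ ((Set.univ : Set X) ×ˢ Y₀)

/-- A bounded operator `T : L²(X,μ) → L²(Y,ν)` is supported on `E ⊆ X × Y` if
whenever `(α × β) ∩ E` is marginally null, `T f` vanishes a.e. on `β` for every `f`
vanishing a.e. off `α` (i.e. `P(β) ∘ T ∘ P(α) = 0`). -/
def SupportedOn {X Y : Type*} [MeasurableSpace X] [MeasurableSpace Y]
    (μ : Measure X) (ν : Measure Y) (T : Lp ℂ 2 μ →L[ℂ] Lp ℂ 2 ν)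
    (E : Set (X × Y)) : Prop :=
  ∀ (α : Set X) (β : Set Y), MeasurableSet α → MeasurableSet β →
    MarginallyNull μ ν ((α ×ˢ β) ∩ E) →
    ∀ f : Lp ℂ 2 μ, (∀ᵐ x ∂μ, x ∉ α → f x = 0) → ∀ᵐ y ∂ν, y ∈ β → T f y = 0

open Filter Topology Set

section Aux

variable {X Y Z : Type*} [MeasurableSpace X] [MeasurableSpace Y] {μ : Measure X} {ν : Measure Y}

/-! ### Multiplication by indicators on `L²` -/

lemma memLp_indicator {A : Set X} (hA : MeasurableSet A) (f : Lp ℂ 2 μ) :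
    MemLp (A.indicator f) 2 μ :=
  (Lp.memLp f).indicator hA

/-- The class in `L²` of `A.indicator f`. -/
noncomputable def indFun (μ : Measure X) {A : Set X} (hA : MeasurableSet A) (f : Lp ℂ 2 μ) :
    Lp ℂ 2 μ :=
  (memLp_indicator hA f).toLp (A.indicator f)

lemma indFun_coe {A : Set X} (hA : MeasurableSet A) (f : Lp ℂ 2 μ) :
    indFun μ hA f =ᵐ[μ] A.indicator f :=
  MemLp.coeFn_toLp (memLp_indicator hA f)

lemma indFun_add {A : Set X} (hA : MeasurableSet A) (f g : Lp ℂ 2 μ) :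
    indFun μ hA (f + g) = indFun μ hA f + indFun μ hA g := by
  apply Lp.ext
  filter_upwards [indFun_coe hA (f + g), indFun_coe hA f, indFun_coe hA g, Lp.coeFn_add f g,
    Lp.coeFn_add (indFun μ hA f) (indFun μ hA g)] with x h1 h2 h3 h4 h5
  rw [h5, Pi.add_apply, h1, h2, h3]
  by_cases h : x ∈ A
  · simp only [indicator_of_mem h, h4, Pi.add_apply]
  · simp only [indicator_of_notMem h, add_zero]

lemma indFun_smul {A : Set X} (hA : MeasurableSet A) (c : ℂ) (f : Lp ℂ 2 μ) :
    indFun μ hA (c • f) = c • indFun μ hA f := by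
  apply Lp.ext
  filter_upwards [indFun_coe hA (c • f), indFun_coe hA f, Lp.coeFn_smul c f,
    Lp.coeFn_smul c (indFun μ hA f)] with x h1 h2 h4 h5
  rw [h5, Pi.smul_apply, h1, h2]
  by_cases h : x ∈ A
  · simp only [indicator_of_mem h, h4, Pi.smul_apply]
  · simp only [indicator_of_notMem h, smul_zero]

lemma norm_indFun_le {A : Set X} (hA : MeasurableSet A) (f : Lp ℂ 2 μ) :
    ‖indFun μ hA f‖ ≤ 1 * ‖f‖ := by
  rw [one_mul]
  refine Lp.norm_le_norm_of_ae_le ?_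
  filter_upwards [indFun_coe hA f] with x hx
  rw [hx]
  exact norm_indicator_le_norm_self _ _

/-- Multiplication by the indicator of a measurable set `A`, as a bounded operator on `L²`. -/
noncomputable def indL (μ : Measure X) {A : Set X} (hA : MeasurableSet A) :
    Lp ℂ 2 μ →L[ℂ] Lp ℂ 2 μ :=
  LinearMap.mkContinuous
    { toFun := indFun μ hA, map_add' := indFun_add hA, map_smul' := indFun_smul hA }
    1 (norm_indFun_le hA)

lemma indL_coe {A : Set X} (hA : MeasurableSet A) (f : Lp ℂ 2 μ) :
    indL μ hA f =ᵐ[μ] A.indicator f :=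
  indFun_coe hA f

lemma indL_indL {A B : Set X} (hA : MeasurableSet A) (hB : MeasurableSet B) (f : Lp ℂ 2 μ) :
    indL μ hA (indL μ hB f) = indL μ (hA.inter hB) f := by
  apply Lp.ext
  filter_upwards [indL_coe hA (indL μ hB f), indL_coe hB f, indL_coe (hA.inter hB) f]
    with x h1 h2 h3
  by_cases a : x ∈ A <;> by_cases b : x ∈ B <;> simp [h1, h2, h3, a, b]

lemma indL_union {A B C : Set X} (hA : MeasurableSet A) (hB : MeasurableSet B)
    (hC : MeasurableSet C) (hd : Disjoint A B) (hu : A ∪ B = C) (f : Lp ℂ 2 μ) :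
    indL μ hC f = indL μ hA f + indL μ hB f := by
  subst hu
  apply Lp.ext
  filter_upwards [indL_coe hA f, indL_coe hB f, indL_coe hC f,
    Lp.coeFn_add (indL μ hA f) (indL μ hB f)] with x h1 h2 h3 h4
  rw [h4, Pi.add_apply, h1, h2, h3, Set.indicator_union_of_disjoint hd]

lemma indL_univ (f : Lp ℂ 2 μ) : indL μ MeasurableSet.univ f = f := by
  apply Lp.ext
  filter_upwards [indL_coe MeasurableSet.univ f] with x h1
  simp [h1]

lemma norm_sq_eq_integral (f : Lp ℂ 2 μ) : ‖f‖ ^ 2 = ∫ x, ‖f x‖ ^ 2 ∂μ := by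
  have h := L2.inner_def (𝕜 := ℂ) f f
  simp only [inner_self_eq_norm_sq_to_K] at h
  norm_cast at h

lemma integrable_norm_sq (f : Lp ℂ 2 μ) : Integrable (fun x => ‖f x‖ ^ 2) μ :=
  (memLp_two_iff_integrable_sq_norm (Lp.aestronglyMeasurable f)).1 (Lp.memLp f)

lemma norm_sq_indL {A : Set X} (hA : MeasurableSet A) (f : Lp ℂ 2 μ) :
    ‖indL μ hA f‖ ^ 2 = ∫ x in A, ‖f x‖ ^ 2 ∂μ := by
  rw [norm_sq_eq_integral, ← integral_indicator hA]
  refine integral_congr_ae ?_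
  filter_upwards [indL_coe hA f] with x hx
  by_cases h : x ∈ A <;> simp [hx, h]

lemma norm_indL_mono {A B : Set X} (hA : MeasurableSet A) (hB : MeasurableSet B) (h : A ⊆ B)
    (f : Lp ℂ 2 μ) : ‖indL μ hA f‖ ≤ ‖indL μ hB f‖ := by
  refine le_of_sq_le_sq ?_ (norm_nonneg _)
  rw [norm_sq_indL, norm_sq_indL]
  exact setIntegral_mono_set (integrable_norm_sq f).integrableOn
    (Eventually.of_forall fun x => by positivity) h.eventuallyLE

lemma norm_indL_le {A : Set X} (hA : MeasurableSet A) (f : Lp ℂ 2 μ) : ‖indL μ hA f‖ ≤ ‖f‖ := by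
  simpa [indL_univ] using norm_indL_mono hA MeasurableSet.univ (subset_univ A) f

lemma norm_sq_indL_union {A B : Set X} (hA : MeasurableSet A) (hB : MeasurableSet B)
    (hd : Disjoint A B) (f : Lp ℂ 2 μ) :
    ‖indL μ (hA.union hB) f‖ ^ 2 = ‖indL μ hA f‖ ^ 2 + ‖indL μ hB f‖ ^ 2 := by
  rw [norm_sq_indL, norm_sq_indL, norm_sq_indL, setIntegral_union hd hB]
  exacts [(integrable_norm_sq f).integrableOn, (integrable_norm_sq f).integrableOn]

lemma tendsto_indL {A : ℕ → Set X} (hA : ∀ i, MeasurableSet (A i)) (hanti : Antitone A)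
    (hnull : μ (⋂ i, A i) = 0) (f : Lp ℂ 2 μ) :
    Tendsto (fun i => ‖indL μ (hA i) f‖) atTop (𝓝 0) := by
  have h := tendsto_setIntegral_of_antitone (μ := μ) (f := fun x => ‖f x‖ ^ 2) hA hanti
    ⟨0, (integrable_norm_sq f).integrableOn⟩
  rw [setIntegral_measure_zero _ hnull] at h
  simp only [← norm_sq_indL (hA _)] at h
  simpa [Real.sqrt_sq] using h.sqrt

/-! ### Compact operators intertwining spectral projections -/

/-- For compact `T`, strong convergence `P (A i) → 0` improves to norm convergence
`P (A i) T → 0`. -/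
lemma exists_norm_indL_le {T : Lp ℂ 2 μ →L[ℂ] Lp ℂ 2 ν} (hT : IsCompactOperator ⇑T)
    {A : ℕ → Set Y} (hA : ∀ i, MeasurableSet (A i)) (hanti : Antitone A)
    (hnull : ν (⋂ i, A i) = 0) {ε : ℝ} (hε : 0 < ε) :
    ∃ i, ∀ f, ‖indL ν (hA i) (T f)‖ ≤ ε * ‖f‖ := by
  have hK := IsCompactOperator.isCompact_closure_image_closedBall (f := (T : Lp ℂ 2 μ →ₗ[ℂ] Lp ℂ 2 ν))
    hT 1
  obtain ⟨i, hi⟩ := hK.elim_directed_cover (fun i => {w | ‖indL ν (hA i) w‖ < ε})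
    (fun i => isOpen_lt (by fun_prop) continuous_const)
    (fun w _ => by
      obtain ⟨i, hi⟩ := ((tendsto_indL hA hanti hnull w).eventually_lt_const hε).exists
      exact mem_iUnion.2 ⟨i, hi⟩)
    (directed_of_isDirected_le fun i j hij w hw =>
      (norm_indL_mono (hA j) (hA i) (hanti hij) w).trans_lt hw)
  refine ⟨i, fun f => ?_⟩
  refine ((indL ν (hA i)).comp T).le_of_opNorm_le
    (ContinuousLinearMap.opNorm_le_of_unit_norm hε.le fun x hx => ?_) f
  have : T x ∈ closure ((T : Lp ℂ 2 μ →ₗ[ℂ] Lp ℂ 2 ν) '' Metric.closedBall 0 1) :=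
    subset_closure ⟨x, by simp [hx], rfl⟩
  exact (hi this).le

/-- A compact operator intertwining the spectral projections of `π` and `φ` vanishes as soon as
the fibres of `π` are null. -/
lemma eq_zero_of_intertwines [TopologicalSpace Z] [CompactSpace Z] [T1Space Z]
    [FirstCountableTopology Z] [MeasurableSpace Z] [OpensMeasurableSpace Z]
    {φ : X → Z} (hφ : Measurable φ) {π : Y → Z} (hπ : Measurable π)
    (hfib : ∀ z, ν (π ⁻¹' {z}) = 0)
    {T : Lp ℂ 2 μ →L[ℂ] Lp ℂ 2 ν} (hT : IsCompactOperator ⇑T)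
    (hcomm : ∀ (A : Set Z) (hA : MeasurableSet A) (f : Lp ℂ 2 μ),
      indL ν (hπ hA) (T f) = T (indL μ (hφ hA) f)) :
    T = 0 := by
  suffices H : ∀ ε : ℝ, 0 < ε → ∀ f, ‖T f‖ ≤ ε * ‖f‖ by
    ext1 f
    rw [zero_apply, ← norm_le_zero_iff]
    have hl : Tendsto (fun ε : ℝ => ε * ‖f‖) (𝓝[>] 0) (𝓝 0) := by
      have : Tendsto (fun ε : ℝ => ε * ‖f‖) (𝓝 0) (𝓝 (0 * ‖f‖)) :=
        tendsto_id.mul tendsto_const_nhds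
      rw [zero_mul] at this
      exact this.mono_left nhdsWithin_le_nhds
    exact ge_of_tendsto hl (eventually_mem_nhdsWithin.mono fun ε hε => H ε hε f)
  intro ε hε
  -- Being block diagonal, `T` sends `P (φ⁻¹ A) f` to a function carried by `π⁻¹ A`.
  have loc : ∀ (A : Set Z) (hA : MeasurableSet A) (f : Lp ℂ 2 μ),
      indL ν (hπ hA) (T f) = indL ν (hπ hA) (T (indL μ (hφ hA) f)) := by
    intro A hA f
    rw [← hcomm A hA, indL_indL]
    simp only [inter_self]
  have key : ∃ A : Set Z, ∃ hA : MeasurableSet A, univ ⊆ A ∧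
      ∀ f, ‖indL ν (hπ hA) (T f)‖ ≤ ε * ‖f‖ := by
    refine isCompact_univ.induction_on (p := fun s => ∃ A : Set Z, ∃ hA : MeasurableSet A, s ⊆ A ∧
      ∀ f, ‖indL ν (hπ hA) (T f)‖ ≤ ε * ‖f‖) ?_ ?_ ?_ ?_
    · refine ⟨∅, MeasurableSet.empty, subset_rfl, fun f => ?_⟩
      have : ‖indL ν (hπ MeasurableSet.empty) (T f)‖ ^ 2 = 0 := by
        rw [norm_sq_indL]; simp
      rw [pow_eq_zero_iff two_ne_zero] at this
      rw [this]
      positivity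
    · rintro s t hst ⟨A, hA, h, hb⟩
      exact ⟨A, hA, hst.trans h, hb⟩
    · rintro s t ⟨A, hA, hs, hb⟩ ⟨B, hB, ht, hb'⟩
      have hBA := hB.diff hA
      refine ⟨A ∪ (B \ A), hA.union hBA, ?_, fun f => ?_⟩
      · rw [union_sdiff_self]; exact union_subset_union hs ht
      have hd : Disjoint A (B \ A) := disjoint_sdiff_right
      have e1 : ‖indL ν (hπ hA) (T f)‖ ≤ ε * ‖indL μ (hφ hA) f‖ := by
        rw [loc A hA]; exact hb _
      have e2 : ‖indL ν (hπ hBA) (T f)‖ ≤ ε * ‖indL μ (hφ hBA) f‖ := by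
        rw [loc _ hBA]
        exact (norm_indL_mono _ (hπ hB) (preimage_mono sdiff_subset) _).trans (hb' _)
      have e3 := norm_sq_indL_union (hφ hA) (hφ hBA) (hd.preimage φ) f
      have e4 := norm_sq_indL_union (hπ hA) (hπ hBA) (hd.preimage π) (T f)
      have e5 := norm_indL_le ((hφ hA).union (hφ hBA)) f
      refine le_of_sq_le_sq ?_ (by positivity)
      calc ‖indL ν (hπ (hA.union hBA)) (T f)‖ ^ 2
          = ‖indL ν (hπ hA) (T f)‖ ^ 2 + ‖indL ν (hπ hBA) (T f)‖ ^ 2 := e4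
        _ ≤ (ε * ‖indL μ (hφ hA) f‖) ^ 2 + (ε * ‖indL μ (hφ hBA) f‖) ^ 2 := by gcongr
        _ = (ε * ‖indL μ ((hφ hA).union (hφ hBA)) f‖) ^ 2 := by
          rw [mul_pow, mul_pow, mul_pow, e3]; ring
        _ ≤ (ε * ‖f‖) ^ 2 := by gcongr
    · intro z _
      obtain ⟨u, hu⟩ := (𝓝 z).exists_antitone_basis
      have hm : ∀ i, MeasurableSet (interior (u i)) := fun i => isOpen_interior.measurableSet
      obtain ⟨i, hi⟩ := exists_norm_indL_le hT (A := fun i => π ⁻¹' interior (u i))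
        (fun i => hπ (hm i)) (fun i k hik => preimage_mono (interior_mono (hu.antitone hik)))
        (by
          refine measure_mono_null (fun y hy => ?_) (hfib z)
          by_contra hne
          obtain ⟨i, hi⟩ := hu.mem_iff.1 (isOpen_compl_singleton.mem_nhds (Ne.symm hne) : {π y}ᶜ ∈ 𝓝 z)
          exact hi (interior_subset (mem_iInter.1 hy i)) rfl) hε
      refine ⟨interior (u i), ?_, interior (u i), hm i, subset_rfl, hi⟩
      rw [nhdsWithin_univ]
      exact interior_mem_nhds.2 (hu.mem i)
  obtain ⟨A, hA, hAu, hb⟩ := key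
  obtain rfl : A = univ := univ_subset_iff.1 hAu
  intro f
  have := hb f
  simp only [preimage_univ, indL_univ] at this
  exact this

/-! ### Supports and induction on the number of graphs -/

lemma MarginallyNull.mono {M N : Set (X × Y)} (h : MarginallyNull μ ν N) (hMN : M ⊆ N) :
    MarginallyNull μ ν M := by
  obtain ⟨X₀, Y₀, h1, h2, h3, h4, h5⟩ := h
  exact ⟨X₀, Y₀, h1, h2, h3, h4, hMN.trans h5⟩

lemma supportedOn_iff {T : Lp ℂ 2 μ →L[ℂ] Lp ℂ 2 ν} {E : Set (X × Y)} :
    SupportedOn μ ν T E ↔ ∀ (α : Set X) (β : Set Y) (hα : MeasurableSet α) (hβ : MeasurableSet β),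
      MarginallyNull μ ν ((α ×ˢ β) ∩ E) → ∀ f, indL ν hβ (T (indL μ hα f)) = 0 := by
  constructor
  · intro h α β hα hβ hM f
    have h1 := h α β hα hβ hM (indL μ hα f) (by
      filter_upwards [indL_coe hα f] with x hx hxα
      simp [hx, hxα])
    apply Lp.ext
    filter_upwards [h1, indL_coe hβ (T (indL μ hα f)), Lp.coeFn_zero ℂ 2 ν] with y h2 h3 h4
    rw [h3, h4]
    by_cases hy : y ∈ β <;> simp [hy, h2]
  · intro h α β hα hβ hM f hf
    have hfα : indL μ hα f = f := by
      apply Lp.ext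
      filter_upwards [indL_coe hα f, hf] with x h1 h2
      rw [h1]
      by_cases hx : x ∈ α <;> simp [hx, h2]
    have h1 := h α β hα hβ hM f
    rw [hfα] at h1
    filter_upwards [indL_coe hβ (T f), Lp.coeFn_zero ℂ 2 ν] with y h2 h3 hy
    rw [h1, h3] at h2
    simpa [hy] using h2.symm

/-- Commuting `T` with the spectral projections of `π` and `φ` removes the graph `π y = φ x` from
the support. -/
lemma SupportedOn.commutator [MeasurableSpace Z] {φ : X → Z} (hφ : Measurable φ) {π : Y → Z}
    (hπ : Measurable π) {T : Lp ℂ 2 μ →L[ℂ] Lp ℂ 2 ν} {E : Set (X × Y)}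
    (hT : SupportedOn μ ν T ({p | π p.2 = φ p.1} ∪ E)) {A : Set Z} (hA : MeasurableSet A) :
    SupportedOn μ ν ((indL ν (hπ hA)).comp T - T.comp (indL μ (hφ hA))) E := by
  rw [supportedOn_iff] at hT ⊢
  intro α β hα hβ hM f
  have hα1 := hα.inter (hφ hA)
  have hα2 := hα.diff (hφ hA)
  have hβ1 := hβ.inter (hπ hA)
  have hβ2 := hβ.diff (hπ hA)
  have z1 := hT _ _ hα2 hβ1 (hM.mono (by
    rintro ⟨x, y⟩ ⟨⟨⟨h1, h2⟩, h3, h4⟩, h5 | h5⟩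
    · exact absurd (show φ x ∈ A from (show π y = φ x from h5) ▸ h4) h2
    · exact ⟨⟨h1, h3⟩, h5⟩)) f
  have z2 := hT _ _ hα1 hβ2 (hM.mono (by
    rintro ⟨x, y⟩ ⟨⟨⟨h1, h2⟩, h3, h4⟩, h5 | h5⟩
    · exact absurd (show π y ∈ A from (show π y = φ x from h5) ▸ h2) h4
    · exact ⟨⟨h1, h3⟩, h5⟩)) f
  have eα : indL μ hα f = indL μ hα1 f + indL μ hα2 f :=
    indL_union _ _ _ disjoint_sdiff_inter.symm (inter_union_sdiff _ _) f
  have eβ : ∀ g, indL ν hβ g = indL ν hβ1 g + indL ν hβ2 g :=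
    indL_union _ _ _ disjoint_sdiff_inter.symm (inter_union_sdiff _ _)
  have eA : indL μ (hφ hA) (indL μ hα f) = indL μ hα1 f := by
    rw [indL_indL]
    simp only [inter_comm]
  simp only [sub_apply, ContinuousLinearMap.comp_apply, map_sub]
  rw [indL_indL, eA, eβ (T _), z2, eα, map_add, map_add, z1]
  simp

/-- The theorem in its natural generality: a compact operator supported on a finite union of sets
`{(x, y) | π_i y = φ_i x}` is zero, provided the fibres of the `π_i` are null. -/
lemma eq_zero_of_supportedOn_iUnion [TopologicalSpace Z] [CompactSpace Z] [T1Space Z]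
    [FirstCountableTopology Z] [MeasurableSpace Z] [OpensMeasurableSpace Z] (k : ℕ)
    (φ : Fin k → X → Z) (hφ : ∀ i, Measurable (φ i)) (π : Fin k → Y → Z)
    (hπ : ∀ i, Measurable (π i)) (hfib : ∀ i z, ν (π i ⁻¹' {z}) = 0)
    (T : Lp ℂ 2 μ →L[ℂ] Lp ℂ 2 ν) (hT : IsCompactOperator ⇑T)
    (hsupp : SupportedOn μ ν T (⋃ i, {p | π i p.2 = φ i p.1})) : T = 0 := by
  induction k generalizing T with
  | zero =>
    ext1 f
    have h := supportedOn_iff.1 hsupp univ univ MeasurableSet.univ MeasurableSet.univ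
      ⟨∅, ∅, by simp⟩ f
    simpa [indL_univ] using h
  | succ k ih =>
    refine eq_zero_of_intertwines (hφ 0) (hπ 0) (hfib 0) hT fun A hA f => ?_
    have hE : (⋃ i, {p : X × Y | π i p.2 = φ i p.1}) =
        {p | π 0 p.2 = φ 0 p.1} ∪ ⋃ i : Fin k, {p | π i.succ p.2 = φ i.succ p.1} := by
      ext p
      simp [Fin.exists_fin_succ]
    rw [hE] at hsupp
    have h0 := ih (fun i => φ i.succ) (fun i => hφ _) (fun i => π i.succ) (fun i => hπ _)
      (fun i => hfib _) _ ((hT.clm_comp (indL ν (hπ 0 hA))).sub (hT.comp_clm (indL μ (hφ 0 hA))))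
      (hsupp.commutator (hφ 0) (hπ 0) hA)
    exact sub_eq_zero.1 (DFunLike.congr_fun h0 f)

end Aux

/-- A compact operator `T : L²(ℝⁿ) → L²(ℝᵐ)` supported on a finite
union of graphs of the form `{(x,y) : y_{j_i} = φ_i(x)}` (with `φ_i` measurable)
is zero. -/
theorem stmt_5
    (n m : ℕ) (hn : 1 ≤ n) (hm : 1 ≤ m) (k : ℕ)
    (φ : Fin k → (Fin n → ℝ) → ℝ) (hφ : ∀ i, Measurable (φ i))
    (j : Fin k → Fin m)
    (T : Lp ℂ 2 (volume : Measure (Fin n → ℝ)) →L[ℂ] Lp ℂ 2 (volume : Measure (Fin m → ℝ)))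
    (hTcomp : IsCompactOperator ⇑T)
    (hTsupp : SupportedOn (volume : Measure (Fin n → ℝ)) (volume : Measure (Fin m → ℝ)) T
      (⋃ i, {p : (Fin n → ℝ) × (Fin m → ℝ) | p.2 (j i) = φ i p.1})) :
    T = 0 := by
  -- The coordinates are viewed in the compact space `EReal`; `±∞` have empty preimage.
  refine eq_zero_of_supportedOn_iUnion k (fun i x => (φ i x : EReal))
    (fun i => measurable_coe_real_ereal.comp (hφ i)) (fun i y => (y (j i) : EReal))
    (fun i => measurable_coe_real_ereal.comp (measurable_pi_apply _)) (fun i z => ?_) T hTcomp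
    (by simpa only [EReal.coe_eq_coe_iff] using hTsupp)
  induction z with
  | bot => simp [preimage]
  | top => simp [preimage]
  | coe c =>
    refine measure_mono_null (fun y hy => ?_)
      (Measure.pi_hyperplane (fun _ : Fin m => (volume : Measure ℝ)) (j i) c)
    simpa using hy
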